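/- Let Q₂ : (0, ∞) → ℂ be defined by Q₂(t) = (2π)^{−2} (4i)^{−1} ∫_ℝ sign(β) |β|^{−2} exp(2iβt) (exp(−(2/3)iβ³) − 1) dβ (an absolutely convergent integral). Then there exist real constants A and B such that Q₂(t) − t^{−5/4} (A·cos((4/3) t^{3/2}) + B·sin((4/3) t^{3/2})) = O(t^{−3/2}) as t → +∞. -/

import Mathlib

/-!
Since the integrand at `-β` is minus the complex conjugate of the integrand at `β`, the kernel is
`Q₂(t) = (2π)⁻² / 2 · Im J(t)`, where `J(t) = ∫_0^∞ β⁻² (e^{iφ(β)} - e^{2iβt}) dβ` and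
`φ(β) = 2βt - (2/3)β³` (`shortLoopQ₂_eq`). Put `t = a²`, so that the stationary point is `β = a`;
the goal is `J = C · a^{-5/2} e^{(4/3) i a³} + O(a⁻³)` (`halfKernel_asymp`), and `A`, `B` are read
off from the imaginary part of the main term.

The singularity at `β = 0` and the stationary point are separated by the identity
`β⁻² = φ'(β) / (2tβ²) + 1/t`. One integration by parts in the first term gives
`J ≈ (1/(it)) M + (1/t) E`, with `M = ∫ β⁻³ (e^{iφ} - e^{2iβt}) dβ` and `E = ∫ e^{iφ} dβ`
(`halfKernel_middle`). All integrals are taken over `[a⁻², a⁴]`; the rest of the half-line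
contributes `O(a⁻³)` to `J`, and every integrand involved is smooth on that interval.

* `M = O(1/a)` (`kernel_cube_bound`): on `[a⁻², a]` integrate `e^{2iβt}` by parts, the derivative
  of `β⁻³ (e^{-(2/3)iβ³} - 1)` being at most `4/β`; on `[a, a⁴]` use the decay of `β⁻³`.
* `E = C · a^{-1/2} e^{(4/3) i a³} + O(1/a)` (`airy_part`): with `β = a + u` the phase becomes
  `(4/3)a³ - 2au² - (2/3)u³`. Dropping the cubic term costs `O(1/a)` (`cubic_correction`), and what
  is left is a rescaled Fresnel integral (`quad_full`). Only the existence of the Fresnel constant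
  and the rate of convergence are needed (`fresnel`), not its value.
-/

open MeasureTheory Filter Asymptotics

/-- The short-loop correction kernel for the two-dimensional model operator
`h²D₁² + h²D₂² − x₁`:
`Q₂(t) = (2π)^{−2} (4i)^{−1} ∫_ℝ sign β · |β|^{−2} exp(2iβt) (exp(−(2/3)iβ³) − 1) dβ`. -/
noncomputable def shortLoopQ₂ (t : ℝ) : ℂ :=
  ((((2*Real.pi) ^ 2)⁻¹ : ℝ) : ℂ) * (4 * Complex.I)⁻¹ *
    ∫ β : ℝ, (Real.sign β : ℂ) * (((|β| ^ 2)⁻¹ : ℝ) : ℂ) *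
      Complex.exp (2 * Complex.I * (β : ℂ) * (t : ℂ)) *
      (Complex.exp (-(2/3) * Complex.I * (β : ℂ)^3) - 1)

/-! ### The cubic factor and elementary tools -/

/-- `e^{-(2/3) i x³} - 1`, the factor by which the cubic term of the phase perturbs an integrand. -/
noncomputable def cubicW (x : ℝ) : ℂ := Complex.exp (-(2/3) * Complex.I * (x : ℂ)^3) - 1

lemma norm_cexp_of_re {z : ℂ} (h : z.re = 0) : ‖Complex.exp z‖ = 1 := by
  rw [Complex.norm_exp, h, Real.exp_zero]

lemma norm_cubicExp (x : ℝ) : ‖Complex.exp (-(2/3) * Complex.I * (x : ℂ)^3)‖ = 1 := by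
  apply norm_cexp_of_re
  have : -(2/3) * Complex.I * (x : ℂ)^3 = Complex.I * ((-(2/3) * x^3 : ℝ) : ℂ) := by
    push_cast; ring
  rw [this]; simp [-Complex.ofReal_mul, -Complex.ofReal_neg, -Complex.ofReal_pow]

lemma norm_linExp (x t : ℝ) : ‖Complex.exp (2 * Complex.I * (x : ℂ) * (t : ℂ))‖ = 1 := by
  apply norm_cexp_of_re
  have : 2 * Complex.I * (x : ℂ) * (t : ℂ) = Complex.I * ((2 * x * t : ℝ) : ℂ) := by
    push_cast; ring
  rw [this]; simp [-Complex.ofReal_mul]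

lemma norm_quadExp (a x : ℝ) : ‖Complex.exp (-2 * Complex.I * (a : ℂ) * (x : ℂ)^2)‖ = 1 := by
  apply norm_cexp_of_re
  have : -2 * Complex.I * (a : ℂ) * (x : ℂ)^2 = Complex.I * ((-2 * a * x^2 : ℝ) : ℂ) := by
    push_cast; ring
  rw [this]; simp [-Complex.ofReal_mul, -Complex.ofReal_neg, -Complex.ofReal_pow]

lemma norm_cubicW_le_two (x : ℝ) : ‖cubicW x‖ ≤ 2 := by
  unfold cubicW
  refine (norm_sub_le _ _).trans ?_
  rw [norm_cubicExp]; norm_num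

lemma norm_cubicW_le_cube (x : ℝ) : ‖cubicW x‖ ≤ 2/3 * |x|^3 := by
  unfold cubicW
  have : -(2/3) * Complex.I * (x : ℂ)^3 = Complex.I * ((-(2/3) * x^3 : ℝ) : ℂ) := by
    push_cast; ring
  rw [this]
  refine (Real.norm_exp_I_mul_ofReal_sub_one_le).trans ?_
  rw [Real.norm_eq_abs, abs_mul, abs_pow]; norm_num

/-- Combines the trivial bound `2` with the bound `(2/3)|x|³` into one integrable majorant.
It also holds at `x = 0`, where the left-hand side is `0` by the convention for division. -/
lemma norm_cubicW_div_sq (x : ℝ) : ‖cubicW x‖ / x^2 ≤ 4 * (1 + x^2)⁻¹ := by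
  rcases eq_or_ne x 0 with rfl | hx
  · simp
  have hx2 : 0 < x^2 := by positivity
  rw [← div_eq_mul_inv, div_le_div_iff₀ hx2 (by positivity)]
  rcases le_total |x| 1 with h | h
  · have h1 := norm_cubicW_le_cube x
    have h2 : |x|^3 = |x| * x^2 := by rw [← sq_abs x]; ring
    have h3 : x^2 ≤ 1 := by rw [← sq_abs]; nlinarith [abs_nonneg x]
    have h4 : ‖cubicW x‖ ≤ 2/3 * x^2 := by
      rw [h2] at h1; nlinarith
    nlinarith [norm_nonneg (cubicW x)]
  · have h1 := norm_cubicW_le_two x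
    have h3 : 1 ≤ x^2 := by rw [← sq_abs]; nlinarith [abs_nonneg x]
    nlinarith

lemma norm_cubicW_div (x : ℝ) : ‖cubicW x‖ / |x| ≤ 2 := by
  rcases eq_or_ne x 0 with rfl | hx
  · simp
  have hx2 : 0 < |x| := by positivity
  rw [div_le_iff₀ hx2]
  rcases le_total |x| 1 with h | h
  · have h1 := norm_cubicW_le_cube x
    have : |x|^3 ≤ |x| := by
      have := pow_le_one₀ (n := 2) (abs_nonneg x) h
      nlinarith
    linarith
  · have h1 := norm_cubicW_le_two x
    linarith

/-- First-derivative estimate: integration by parts with a majorant `h` of the remaining integrand. -/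
lemma ibp_bound {u v u' v' : ℝ → ℂ} {h : ℝ → ℝ} {p q : ℝ} (hpq : p ≤ q)
    (hu : ∀ x ∈ Set.Icc p q, HasDerivAt u (u' x) x)
    (hv : ∀ x ∈ Set.Icc p q, HasDerivAt v (v' x) x)
    (hu' : ContinuousOn u' (Set.Icc p q)) (hv' : ContinuousOn v' (Set.Icc p q))
    (hh : ContinuousOn h (Set.Icc p q))
    (hb : ∀ x ∈ Set.Icc p q, ‖u' x‖ * ‖v x‖ ≤ h x) :
    ‖∫ x in p..q, u x * v' x‖ ≤ ‖u q‖ * ‖v q‖ + ‖u p‖ * ‖v p‖ + ∫ x in p..q, h x := by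
  have e := Set.uIcc_of_le hpq
  rw [intervalIntegral.integral_mul_deriv_eq_deriv_mul (u := u) (v := v) (u' := u') (v' := v')
    (by rwa [e]) (by rwa [e]) (ContinuousOn.intervalIntegrable (by rwa [e]))
    (ContinuousOn.intervalIntegrable (by rwa [e]))]
  refine (norm_sub_le _ _).trans (add_le_add ((norm_sub_le _ _).trans ?_) ?_)
  · simp
  · refine intervalIntegral.norm_integral_le_of_norm_le hpq ?_
      (ContinuousOn.intervalIntegrable (by rwa [e]))
    refine Eventually.of_forall fun x hx => ?_
    rw [norm_mul]
    exact hb x ⟨hx.1.le, hx.2⟩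

lemma integral_inv_sq_shift (s : ℝ) {p q : ℝ} (hpq : p ≤ q) (hp : 0 < s + p) :
    ∫ x in p..q, ((s + x)^2)⁻¹ = (s+p)⁻¹ - (s+q)⁻¹ := by
  have e := Set.uIcc_of_le hpq
  have hne : ∀ x ∈ Set.Icc p q, s + x ≠ 0 := fun x hx =>
    (show 0 < s + x by linarith [hx.1]).ne'
  rw [intervalIntegral.integral_eq_sub_of_hasDerivAt (f := fun x => -(s+x)⁻¹)]
  · ring
  · intro x hx
    rw [e] at hx
    have := (((hasDerivAt_id' x).const_add s).fun_inv (hne x hx)).fun_neg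
    exact this.congr_deriv (by ring)
  · apply ContinuousOn.intervalIntegrable
    rw [e]
    exact ContinuousOn.inv₀ (by fun_prop) fun x hx => pow_ne_zero 2 (hne x hx)

lemma hasDerivAt_quadExp (a x : ℝ) :
    HasDerivAt (fun x : ℝ => Complex.exp (-2 * Complex.I * (a : ℂ) * (x : ℂ)^2))
      (-4 * Complex.I * a * x * Complex.exp (-2 * Complex.I * (a : ℂ) * (x : ℂ)^2)) x := by
  have h1 : HasDerivAt (fun x : ℝ => (x : ℂ)) 1 x := Complex.ofRealCLM.hasDerivAt
  have := ((h1.fun_pow 2).const_mul (-2 * Complex.I * (a : ℂ))).cexp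
  convert this using 1
  simp; ring

lemma hasDerivAt_cubicExp (x : ℝ) :
    HasDerivAt (fun x : ℝ => Complex.exp (-(2/3) * Complex.I * (x : ℂ)^3))
      (-2 * Complex.I * x^2 * Complex.exp (-(2/3) * Complex.I * (x : ℂ)^3)) x := by
  have h1 : HasDerivAt (fun x : ℝ => (x : ℂ)) 1 x := Complex.ofRealCLM.hasDerivAt
  have := ((h1.fun_pow 3).const_mul (-(2/3) * Complex.I)).cexp
  convert this using 1
  simp; ring

lemma hasDerivAt_cubicW (x : ℝ) :
    HasDerivAt cubicW
      (-2 * Complex.I * x^2 * Complex.exp (-(2/3) * Complex.I * (x : ℂ)^3)) x :=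
  (hasDerivAt_cubicExp x).sub_const 1

lemma hasDerivAt_linExp (t x : ℝ) :
    HasDerivAt (fun x : ℝ => Complex.exp (2 * Complex.I * (x : ℂ) * (t : ℂ)))
      (2 * Complex.I * t * Complex.exp (2 * Complex.I * (x : ℂ) * (t : ℂ))) x := by
  have h1 : HasDerivAt (fun x : ℝ => (x : ℂ)) 1 x := Complex.ofRealCLM.hasDerivAt
  have := ((h1.const_mul (2 * Complex.I)).mul_const (t : ℂ)).cexp
  exact this.congr_deriv (by ring)

lemma hasDerivAt_ofReal_inv {x : ℝ} (hx : x ≠ 0) :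
    HasDerivAt (fun x : ℝ => (x : ℂ)⁻¹) (-((x : ℂ)^2)⁻¹) x := by
  have h1 : HasDerivAt (fun x : ℝ => (x : ℂ)) 1 x := Complex.ofRealCLM.hasDerivAt
  exact (h1.fun_inv (by exact_mod_cast hx)).congr_deriv (by ring)

/-! ### The Fresnel integral -/

lemma fresnel_tail {X Y : ℝ} (hX : 0 < X) (hXY : X ≤ Y) :
    ‖∫ w in X..Y, Complex.exp (-2 * Complex.I * (w : ℂ)^2)‖ ≤ 1 / X := by
  have hne : ∀ x ∈ Set.Icc X Y, x ≠ 0 := fun x hx => (hX.trans_le hx.1).ne'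
  have hc : ∀ x ∈ Set.Icc X Y, (x : ℂ)^2 ≠ 0 := fun x hx =>
    pow_ne_zero 2 (by exact_mod_cast hne x hx)
  have key := ibp_bound (u := fun w : ℝ => (w : ℂ)⁻¹)
    (v := fun w : ℝ => Complex.exp (-2 * Complex.I * ((1:ℝ) : ℂ) * (w : ℂ)^2))
    (u' := fun w : ℝ => -((w : ℂ)^2)⁻¹) (h := fun w => ((0 + w)^2)⁻¹)
    hXY (fun x hx => hasDerivAt_ofReal_inv (hne x hx)) (fun x _ => hasDerivAt_quadExp 1 x)
    (ContinuousOn.neg (ContinuousOn.inv₀ (by fun_prop) hc)) (by fun_prop)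
    (ContinuousOn.inv₀ (by fun_prop) fun x hx => pow_ne_zero 2 (by simpa using hne x hx))
    (fun x hx => by
      rw [norm_quadExp, zero_add]; simp)
  rw [integral_inv_sq_shift 0 hXY (by linarith)] at key
  simp only [norm_quadExp] at key
  have e : ∫ w in X..Y, Complex.exp (-2 * Complex.I * (w : ℂ)^2) =
      (Complex.I/4) * ∫ x in X..Y, (x : ℂ)⁻¹ * (-4 * Complex.I * ((1:ℝ) : ℂ) * x *
        Complex.exp (-2 * Complex.I * ((1:ℝ) : ℂ) * (x : ℂ)^2)) := by
    rw [← intervalIntegral.integral_const_mul]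
    apply intervalIntegral.integral_congr
    intro x hx
    rw [Set.uIcc_of_le hXY] at hx
    have : (x : ℂ) ≠ 0 := by exact_mod_cast hne x hx
    field_simp
    push_cast
    rw [mul_one, Complex.I_sq]
    ring_nf
  rw [e, norm_mul]
  have hY : 0 < Y := hX.trans_le hXY
  have h2 : Y⁻¹ ≤ X⁻¹ := inv_anti₀ hX hXY
  have h3 : ‖Complex.I/4‖ = 1/4 := by simp
  rw [h3]
  simp only [norm_inv, Complex.norm_real, Real.norm_eq_abs, abs_of_pos hX, abs_of_pos hY, zero_add] at key
  have : 0 < X⁻¹ := by positivity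
  rw [one_div X]
  linarith

lemma fresnel : ∃ c : ℂ, ∀ X : ℝ, 0 < X →
    ‖(∫ w in (0:ℝ)..X, Complex.exp (-2 * Complex.I * (w : ℂ)^2)) - c‖ ≤ 1 / X := by
  set G : ℝ → ℂ := fun X => ∫ w in (0:ℝ)..X, Complex.exp (-2 * Complex.I * (w : ℂ)^2) with hG
  have hint : ∀ p q : ℝ, IntervalIntegrable (fun w : ℝ => Complex.exp (-2 * Complex.I * (w : ℂ)^2))
      volume p q := fun p q => Continuous.intervalIntegrable (by fun_prop) p q
  have hd : ∀ X Y, 0 < X → X ≤ Y → ‖G X - G Y‖ ≤ 1 / X := by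
    intro X Y hX hXY
    rw [norm_sub_rev]
    have : G Y - G X = ∫ w in X..Y, Complex.exp (-2 * Complex.I * (w : ℂ)^2) :=
      intervalIntegral.integral_interval_sub_left (hint _ _) (hint _ _)
    rw [this]
    exact fresnel_tail hX hXY
  have hcau : CauchySeq (fun n : ℕ => G (n + 1)) := by
    refine cauchySeq_of_le_tendsto_0 (fun n : ℕ => 2 * (1 / ((n : ℝ) + 1))) ?_ ?_
    · intro n m N hn hm
      have hN : (0:ℝ) < N + 1 := by positivity
      have h1 := hd (N+1) (n+1) hN (by gcongr)
      have h2 := hd (N+1) (m+1) hN (by gcongr)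
      rw [← dist_eq_norm] at h1 h2
      have := dist_triangle_left (G (n+1)) (G (m+1)) (G (N+1))
      linarith
    · simpa using (tendsto_one_div_add_atTop_nhds_zero_nat (𝕜 := ℝ)).const_mul 2
  obtain ⟨c, hc⟩ := cauchySeq_tendsto_of_complete hcau
  refine ⟨c, fun X hX => ?_⟩
  refine le_of_tendsto ((tendsto_const_nhds (x := G X)).sub hc).norm ?_
  filter_upwards [eventually_ge_atTop ⌈X⌉₊] with n hn
  refine hd X _ hX ?_
  have : X ≤ n := Nat.ceil_le.mp hn
  linarith

/-- Rescaling `u = w / √a` turns the quadratic phase into the Fresnel integral; each half-line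
contributes the same constant. -/
lemma quad_full : ∃ c : ℂ, ∀ a X Y : ℝ, 1 ≤ a → 1 ≤ X → 1 ≤ Y →
    ‖(∫ u in (-X)..Y, Complex.exp (-2 * Complex.I * (a : ℂ) * (u : ℂ)^2)) - c / (Real.sqrt a : ℝ)‖
      ≤ 2 / a := by
  obtain ⟨c, hc⟩ := fresnel
  have half : ∀ a X : ℝ, 1 ≤ a → 1 ≤ X →
      ‖(∫ u in (0:ℝ)..X, Complex.exp (-2 * Complex.I * (a : ℂ) * (u : ℂ)^2))
        - c / (Real.sqrt a : ℝ)‖ ≤ 1 / a := by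
    intro a X ha hX
    have hs : 0 < Real.sqrt a := Real.sqrt_pos.mpr (by linarith)
    have hsq : Real.sqrt a * Real.sqrt a = a := Real.mul_self_sqrt (by linarith)
    have h1 := hc (Real.sqrt a * X) (by positivity)
    have e : (∫ u in (0:ℝ)..X, Complex.exp (-2 * Complex.I * (a : ℂ) * (u : ℂ)^2)) =
        ((Real.sqrt a : ℝ) : ℂ)⁻¹ *
          ∫ w in (0:ℝ)..(Real.sqrt a * X), Complex.exp (-2 * Complex.I * (w : ℂ)^2) := by
      have := intervalIntegral.integral_comp_mul_left (a := 0) (b := X)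
        (fun w : ℝ => Complex.exp (-2 * Complex.I * (w : ℂ)^2)) hs.ne'
      rw [mul_zero, Complex.real_smul, Complex.ofReal_inv] at this
      rw [← this]
      apply intervalIntegral.integral_congr
      intro u _
      simp only
      congr 1
      rw [← hsq]
      simp only [Real.sqrt_mul_self hs.le]
      push_cast; ring
    have e2 : ((Real.sqrt a : ℝ) : ℂ)⁻¹ *
          (∫ w in (0:ℝ)..(Real.sqrt a * X), Complex.exp (-2 * Complex.I * (w : ℂ)^2))
          - c / (Real.sqrt a : ℝ) = ((Real.sqrt a : ℝ) : ℂ)⁻¹ *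
          ((∫ w in (0:ℝ)..(Real.sqrt a * X), Complex.exp (-2 * Complex.I * (w : ℂ)^2)) - c) := by
      ring
    rw [e, e2, norm_mul, norm_inv, Complex.norm_real, Real.norm_eq_abs, abs_of_pos hs]
    calc (Real.sqrt a)⁻¹ * _ ≤ (Real.sqrt a)⁻¹ * (1 / (Real.sqrt a * X)) := by gcongr
      _ = (1 / a) * (1 / X) := by
        rw [← hsq]; simp only [Real.sqrt_mul_self hs.le]; field_simp
      _ ≤ 1 / a * 1 := by
        gcongr
        rw [div_le_one (by linarith)]; exact hX
      _ = 1 / a := mul_one _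
  refine ⟨2 * c, fun a X Y ha hX hY => ?_⟩
  have hint : ∀ p q : ℝ, IntervalIntegrable
      (fun u : ℝ => Complex.exp (-2 * Complex.I * (a : ℂ) * (u : ℂ)^2))
      volume p q := fun p q => Continuous.intervalIntegrable (by fun_prop) p q
  have hneg : (∫ u in (-X)..0, Complex.exp (-2 * Complex.I * (a : ℂ) * (u : ℂ)^2)) =
      ∫ u in (0:ℝ)..X, Complex.exp (-2 * Complex.I * (a : ℂ) * (u : ℂ)^2) := by
    have := intervalIntegral.integral_comp_neg (a := 0) (b := X)
      (fun u : ℝ => Complex.exp (-2 * Complex.I * (a : ℂ) * (u : ℂ)^2))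
    rw [neg_zero] at this
    rw [← this]
    simp
  rw [← intervalIntegral.integral_add_adjacent_intervals (hint (-X) 0) (hint 0 Y), hneg]
  have h1 := half a X ha hX
  have h2 := half a Y ha hY
  have := (norm_add_le _ _).trans (add_le_add h1 h2)
  refine le_trans (le_of_eq ?_) (this.trans (le_of_eq (by ring)))
  congr 1; ring

/-! ### The stationary point -/

/-- Effect of the cubic term of the phase on one side of the stationary point `u = 0`. With
`Ψ = -2au² - (2/3)u³` and `F = e^{iΨ} - e^{-2iau²}` one has
`F = (i/(4a)) (F'/u - (e^{iΨ})'/(2a + u))`; both terms are integrated by parts, and the first leaves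
`F/u²`, whose integral is bounded independently of `a`, `p` and `q`. -/
lemma cubic_correction_side {a p q : ℝ} (ha : 1 ≤ a) (hap : -a ≤ p) (hpq : p ≤ q)
    (h0 : 0 < p ∨ q < 0) :
    ‖∫ u in p..q, Complex.exp (-2 * Complex.I * (a : ℂ) * (u : ℂ)^2) * cubicW u‖ ≤ 6 / a := by
  have hne : ∀ x ∈ Set.Icc p q, x ≠ 0 := by
    rintro x hx rfl
    rcases h0 with h | h
    · linarith [hx.1]
    · linarith [hx.2]
  have hpos : ∀ x ∈ Set.Icc p q, 0 < 2 * a + x := fun x hx => by linarith [hx.1]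
  have hc : ∀ x ∈ Set.Icc p q, (x : ℂ) ≠ 0 := fun x hx => by exact_mod_cast hne x hx
  have hc2 : ∀ x ∈ Set.Icc p q, ((2 * a + x : ℝ) : ℂ) ≠ 0 := fun x hx => by
    exact_mod_cast (hpos x hx).ne'
  have hW : Continuous cubicW := by unfold cubicW; fun_prop
  have hpm : p ∈ Set.Icc p q := ⟨le_rfl, hpq⟩
  have hqm : q ∈ Set.Icc p q := ⟨hpq, le_rfl⟩
  set Q : ℝ → ℂ := fun u => Complex.exp (-2 * Complex.I * (a : ℂ) * (u : ℂ)^2) with hQ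
  set C : ℝ → ℂ := fun u => Complex.exp (-(2/3) * Complex.I * (u : ℂ)^3) with hC
  have hQn : ∀ u, ‖Q u‖ = 1 := norm_quadExp a
  have hCn : ∀ u, ‖C u‖ = 1 := norm_cubicExp
  have hQd : ∀ u, HasDerivAt Q (-4 * Complex.I * a * u * Q u) u := hasDerivAt_quadExp a
  have hCd : ∀ u, HasDerivAt C (-2 * Complex.I * u^2 * C u) u := hasDerivAt_cubicExp
  have hWd : ∀ u, HasDerivAt cubicW (-2 * Complex.I * u^2 * C u) u := hasDerivAt_cubicW
  have hQc : Continuous Q := by rw [hQ]; fun_prop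
  have hCc : Continuous C := by rw [hC]; fun_prop
  set F' : ℝ → ℂ := fun u => -4 * Complex.I * a * u * Q u * cubicW u +
    Q u * (-2 * Complex.I * u^2 * C u) with hF'
  set E' : ℝ → ℂ := fun u => -4 * Complex.I * a * u * Q u * C u +
    Q u * (-2 * Complex.I * u^2 * C u) with hE'
  have hF'c : Continuous F' := by rw [hF']; fun_prop
  have hE'c : Continuous E' := by rw [hE']; fun_prop
  have hsd : ∀ x ∈ Set.Icc p q, HasDerivAt (fun u : ℝ => ((2 * a + u : ℝ) : ℂ)⁻¹)
      (-(((2 * a + x : ℝ) : ℂ)^2)⁻¹) x := by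
    intro x hx
    have h1 : HasDerivAt (fun x : ℝ => ((2 * a + x : ℝ) : ℂ)) 1 x := by
      simpa using ((hasDerivAt_id' x).const_add (2 * a)).ofReal_comp
    exact (h1.fun_inv (hc2 x hx)).congr_deriv (by ring)
  -- `k1` treats the term `F'/u`, and `k2` the term `(e^{iΨ})'/(2a + u)`.
  have k1 := ibp_bound (u := fun u : ℝ => (u : ℂ)⁻¹) (v := fun u => Q u * cubicW u)
    (u' := fun u : ℝ => -((u : ℂ)^2)⁻¹) (v' := F') (h := fun u => 4 * (1 + u^2)⁻¹) hpq
    (fun x hx => hasDerivAt_ofReal_inv (hne x hx)) (fun x _ => (hQd x).mul (hWd x))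
    (ContinuousOn.neg (ContinuousOn.inv₀ (by fun_prop) fun x hx => pow_ne_zero 2 (hc x hx)))
    hF'c.continuousOn
    (ContinuousOn.mul (by fun_prop)
      (ContinuousOn.inv₀ (by fun_prop) fun x _ => by positivity))
    (fun x hx => by
      rw [norm_mul, hQn, one_mul, norm_neg, norm_inv, norm_pow, Complex.norm_real,
        Real.norm_eq_abs, sq_abs, inv_mul_eq_div]
      exact norm_cubicW_div_sq x)
  have k2 := ibp_bound (u := fun u : ℝ => ((2 * a + u : ℝ) : ℂ)⁻¹) (v := fun u => Q u * C u)
    (u' := fun u : ℝ => -(((2 * a + u : ℝ) : ℂ)^2)⁻¹) (v' := E')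
    (h := fun u => ((2 * a + u)^2)⁻¹) hpq
    hsd (fun x _ => (hQd x).mul (hCd x))
    (ContinuousOn.neg (ContinuousOn.inv₀ (by fun_prop) fun x hx => pow_ne_zero 2 (hc2 x hx)))
    hE'c.continuousOn
    (ContinuousOn.inv₀ (by fun_prop) fun x hx => pow_ne_zero 2 (hpos x hx).ne')
    (fun x hx => by
      rw [norm_mul, hQn, hCn, one_mul, mul_one, norm_neg, norm_inv, norm_pow, Complex.norm_real,
        Real.norm_eq_abs, sq_abs])
  rw [integral_inv_sq_shift (2 * a) hpq (hpos p hpm)] at k2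
  rw [intervalIntegral.integral_const_mul, integral_inv_one_add_sq] at k1
  simp only [norm_mul, hQn, hCn, one_mul, mul_one, norm_inv, Complex.norm_real, Real.norm_eq_abs,
    abs_of_pos (hpos p hpm), abs_of_pos (hpos q hqm), inv_mul_eq_div] at k1 k2
  have hp2 := norm_cubicW_div p
  have hq2 := norm_cubicW_div q
  have b1 := Real.arctan_lt_pi_div_two q
  have b2 := Real.neg_pi_div_two_lt_arctan p
  have b3 := Real.pi_lt_four
  have b4 : (2 * a + p)⁻¹ ≤ 1 := inv_le_one_of_one_le₀ (by linarith)
  have e : ∫ u in p..q, Q u * cubicW u = (Complex.I / (4 * a)) *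
      ((∫ u in p..q, F' u / (u : ℂ)) - ∫ u in p..q, E' u / ((2 * a + u : ℝ) : ℂ)) := by
    rw [← intervalIntegral.integral_sub, ← intervalIntegral.integral_const_mul]
    · apply intervalIntegral.integral_congr
      intro u hu
      rw [Set.uIcc_of_le hpq] at hu
      have n1 := hc u hu
      have n2 := hc2 u hu
      have n3 : (a : ℂ) ≠ 0 := by exact_mod_cast (by linarith : a ≠ 0)
      have hw : cubicW u = C u - 1 := rfl
      have hE2 : E' u / ((2 * a + u : ℝ) : ℂ) = -2 * Complex.I * u * Q u * C u := by
        rw [div_eq_iff n2]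
        simp only [hE']
        push_cast
        ring
      have hF2 : F' u / (u : ℂ) = -4 * Complex.I * a * Q u * cubicW u
          - 2 * Complex.I * u * Q u * C u := by
        rw [div_eq_iff n1]
        simp only [hF']
        ring
      simp only [hE2, hF2, hw]
      field_simp
      ring_nf
      simp only [Complex.I_sq]
      ring
    · apply ContinuousOn.intervalIntegrable
      rw [Set.uIcc_of_le hpq]
      exact hF'c.continuousOn.div (by fun_prop) hc
    · apply ContinuousOn.intervalIntegrable
      rw [Set.uIcc_of_le hpq]
      exact hE'c.continuousOn.div (by fun_prop) hc2
  rw [e, norm_mul]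
  have n4 : ‖Complex.I / (4 * (a : ℂ))‖ = 1 / (4 * a) := by
    rw [norm_div, Complex.norm_I, norm_mul, Complex.norm_real, Real.norm_eq_abs,
      abs_of_pos (by linarith)]
    norm_num
  rw [n4]
  have tot := (norm_sub_le (∫ u in p..q, F' u / (u : ℂ))
    (∫ u in p..q, E' u / ((2 * a + u : ℝ) : ℂ))).trans (add_le_add k1 k2)
  calc 1 / (4 * a) * _ ≤ 1 / (4 * a) * 24 := by
        gcongr
        linarith
    _ = 6 / a := by field_simp; norm_num

lemma cubic_correction {a p q : ℝ} (ha : 1 ≤ a) (hap : -a ≤ p) (hp : p ≤ -(1/a)) (hq : 1/a ≤ q) :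
    ‖∫ u in p..q, Complex.exp (-2 * Complex.I * (a : ℂ) * (u : ℂ)^2) * cubicW u‖ ≤ 16 / a := by
  have hW : Continuous cubicW := by unfold cubicW; fun_prop
  have hint : ∀ p q : ℝ, IntervalIntegrable
      (fun u : ℝ => Complex.exp (-2 * Complex.I * (a : ℂ) * (u : ℂ)^2) * cubicW u)
      volume p q := fun p q => Continuous.intervalIntegrable (by fun_prop) p q
  have ha0 : 0 < 1 / a := by positivity
  have h1 := cubic_correction_side (q := -(1/a)) ha hap hp (Or.inr (by linarith))
  have h2 := cubic_correction_side (p := 1/a) ha (by linarith) hq (Or.inl ha0)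
  have h3 : ‖∫ u in (-(1/a))..(1/a),
      Complex.exp (-2 * Complex.I * (a : ℂ) * (u : ℂ)^2) * cubicW u‖ ≤ 2 * |1/a - -(1/a)| := by
    apply intervalIntegral.norm_integral_le_of_norm_le_const
    intro u _
    rw [norm_mul, norm_quadExp, one_mul]
    exact norm_cubicW_le_two u
  rw [abs_of_pos (by linarith)] at h3
  rw [← intervalIntegral.integral_add_adjacent_intervals (hint p (1/a)) (hint (1/a) q),
    ← intervalIntegral.integral_add_adjacent_intervals (hint p (-(1/a))) (hint (-(1/a)) (1/a))]
  refine (norm_add_le _ _).trans ((add_le_add ((norm_add_le _ _).trans (add_le_add h1 h3)) h2).trans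
    (le_of_eq ?_))
  ring

/-- Stationary phase for `∫ e^{i(2βa² - (2/3)β³)} dβ`. -/
lemma airy_part : ∃ c : ℂ, ∀ a : ℝ, 2 ≤ a →
    ‖(∫ β in (1/a^2)..(a^4), Complex.exp (2 * Complex.I * (β : ℂ) * ((a^2 : ℝ) : ℂ)) *
        Complex.exp (-(2/3) * Complex.I * (β : ℂ)^3))
      - Complex.exp (((4/3 * a^3 : ℝ) : ℂ) * Complex.I) * (c / (Real.sqrt a : ℝ))‖ ≤ 18 / a := by
  obtain ⟨c, hc⟩ := quad_full
  refine ⟨c, fun a ha => ?_⟩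
  have ha1 : 1 ≤ a := by linarith
  have s1 : 1 / a ≤ 1/2 := by
    rw [div_le_div_iff₀ (by linarith) (by norm_num)]; linarith
  have s2 : 1 / a^2 ≤ 1/4 := by
    rw [div_le_div_iff₀ (by positivity) (by norm_num)]; nlinarith
  have s3 : 0 < 1 / a^2 := by positivity
  have s4 : a + 1 ≤ a^4 := by
    have : 2 * a ≤ a^2 := by nlinarith
    have : 4 * a^2 ≤ a^4 := by nlinarith
    linarith
  have h1 := hc a (a - 1/a^2) (a^4 - a) ha1 (by linarith) (by linarith)
  have h2 := cubic_correction (a := a) (p := -(a - 1/a^2)) (q := a^4 - a) ha1 (by linarith)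
    (by linarith) (by linarith)
  have hW : Continuous cubicW := by unfold cubicW; fun_prop
  -- Translation of the stationary point `β = a` to the origin.
  have e : (∫ β in (1/a^2)..(a^4), Complex.exp (2 * Complex.I * (β : ℂ) * ((a^2 : ℝ) : ℂ)) *
        Complex.exp (-(2/3) * Complex.I * (β : ℂ)^3)) =
      Complex.exp (((4/3 * a^3 : ℝ) : ℂ) * Complex.I) *
      ((∫ u in (-(a - 1/a^2))..(a^4-a), Complex.exp (-2 * Complex.I * (a : ℂ) * (u : ℂ)^2)) +
      ∫ u in (-(a - 1/a^2))..(a^4-a),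
        Complex.exp (-2 * Complex.I * (a : ℂ) * (u : ℂ)^2) * cubicW u) := by
    rw [← intervalIntegral.integral_add (Continuous.intervalIntegrable (by fun_prop) _ _)
      (Continuous.intervalIntegrable (by fun_prop) _ _), ← intervalIntegral.integral_const_mul]
    have := intervalIntegral.integral_comp_sub_right (a := 1/a^2) (b := a^4)
      (fun u : ℝ => Complex.exp (((4/3 * a^3 : ℝ) : ℂ) * Complex.I) *
        (Complex.exp (-2 * Complex.I * (a : ℂ) * (u : ℂ)^2) +
        Complex.exp (-2 * Complex.I * (a : ℂ) * (u : ℂ)^2) * cubicW u)) a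
    rw [show -(a - 1/a^2) = 1/a^2 - a by ring, ← this]
    congr 1
    funext β
    unfold cubicW
    rw [mul_sub, mul_one, add_sub_cancel, ← Complex.exp_add, ← Complex.exp_add, ← Complex.exp_add]
    congr 1
    push_cast
    ring
  rw [e, ← mul_sub, norm_mul, Complex.norm_exp_ofReal_mul_I, one_mul, add_sub_right_comm]
  refine (norm_add_le _ _).trans ((add_le_add h1 h2).trans (le_of_eq (by ring)))

/-! ### The singularity at zero -/

lemma kernel_cube_bound {a : ℝ} (ha : 2 ≤ a) :
    ‖∫ β in (1/a^2)..(a^4), ((β : ℂ)^3)⁻¹ *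
      (Complex.exp (2 * Complex.I * (β : ℂ) * ((a^2 : ℝ) : ℂ)) * cubicW β)‖ ≤ 9 / a := by
  have ha0 : 0 < a := by linarith
  have s3 : 0 < 1 / a^2 := by positivity
  have s1 : 1 / a^2 ≤ a := by
    rw [div_le_iff₀ (by positivity)]; nlinarith [sq_nonneg a]
  have s2 : a ≤ a^4 := by
    have : 2 * a ≤ a^2 := by nlinarith
    have : 4 * a^2 ≤ a^4 := by nlinarith
    linarith
  have hW : Continuous cubicW := by unfold cubicW; fun_prop
  have hne : ∀ x : ℝ, 1/a^2 ≤ x → (x : ℂ) ≠ 0 := fun x hx => by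
    exact_mod_cast (s3.trans_le hx).ne'
  have hcont : ∀ p q : ℝ, 1/a^2 ≤ p → p ≤ q → IntervalIntegrable (fun β : ℝ => ((β : ℂ)^3)⁻¹ *
      (Complex.exp (2 * Complex.I * (β : ℂ) * ((a^2 : ℝ) : ℂ)) * cubicW β)) volume p q := by
    intro p q hp hpq
    apply ContinuousOn.intervalIntegrable
    rw [Set.uIcc_of_le hpq]
    exact ContinuousOn.mul (ContinuousOn.inv₀ (by fun_prop)
      fun x hx => pow_ne_zero 3 (hne x (hp.trans hx.1))) (by fun_prop)
  have ht : (2 * Complex.I * ((a^2 : ℝ) : ℂ)) ≠ 0 := by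
    have : ((a^2 : ℝ) : ℂ) ≠ 0 := by exact_mod_cast (by positivity : a^2 ≠ 0)
    simp [ha0.ne']
  have hnt : ‖2 * Complex.I * ((a^2 : ℝ) : ℂ)‖ = 2 * a^2 := by
    rw [norm_mul, norm_mul, Complex.norm_I, Complex.norm_real, Real.norm_eq_abs,
      abs_of_pos (by positivity)]
    norm_num
  have hm : ∀ x : ℝ, 0 < x → ‖((x : ℂ)^3)⁻¹ * cubicW x‖ ≤ 1 := by
    intro x hx
    have := norm_cubicW_le_cube x
    rw [abs_of_pos hx] at this
    rw [norm_mul, norm_inv, norm_pow, Complex.norm_real, Real.norm_eq_abs, abs_of_pos hx,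
      inv_mul_eq_div, div_le_one (by positivity)]
    have : 0 < x^3 := by positivity
    linarith
  have k1 := ibp_bound (p := 1/a^2) (q := a)
    (u := fun β : ℝ => ((β : ℂ)^3)⁻¹ * cubicW β)
    (u' := fun β : ℝ => -3 * ((β : ℂ)^4)⁻¹ * cubicW β +
      ((β : ℂ)^3)⁻¹ * (-2 * Complex.I * β^2 * Complex.exp (-(2/3) * Complex.I * (β : ℂ)^3)))
    (v := fun β : ℝ => Complex.exp (2 * Complex.I * (β : ℂ) * ((a^2 : ℝ) : ℂ)) /
      (2 * Complex.I * ((a^2 : ℝ) : ℂ)))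
    (v' := fun β : ℝ => Complex.exp (2 * Complex.I * (β : ℂ) * ((a^2 : ℝ) : ℂ)))
    (h := fun β => (2 / a^2) * β⁻¹) s1
    (fun x hx => by
      have hx0 := hne x hx.1
      have h1 : HasDerivAt (fun x : ℝ => (x : ℂ)) 1 x := Complex.ofRealCLM.hasDerivAt
      have h2 : HasDerivAt (fun x : ℝ => ((x : ℂ)^3)⁻¹) (-3 * ((x : ℂ)^4)⁻¹) x := by
        refine ((h1.fun_pow 3).fun_inv (pow_ne_zero 3 hx0)).congr_deriv ?_
        field_simp
        norm_num
        ring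
      exact h2.mul (hasDerivAt_cubicW x))
    (fun x _ => ((hasDerivAt_linExp (a^2) x).div_const _).congr_deriv (by
      rw [mul_div_cancel_left₀ _ ht]))
    (ContinuousOn.add
      (ContinuousOn.mul (ContinuousOn.mul (by fun_prop) (ContinuousOn.inv₀ (by fun_prop)
        fun x hx => pow_ne_zero 4 (hne x hx.1))) (by fun_prop))
      (ContinuousOn.mul (ContinuousOn.inv₀ (by fun_prop)
        fun x hx => pow_ne_zero 3 (hne x hx.1)) (by fun_prop)))
    (by fun_prop)
    (ContinuousOn.mul (by fun_prop) (ContinuousOn.inv₀ (by fun_prop)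
      fun x hx => (s3.trans_le hx.1).ne'))
    (fun x hx => by
      have hx0 : 0 < x := s3.trans_le hx.1
      have hw := norm_cubicW_le_cube x
      rw [abs_of_pos hx0] at hw
      have n1 : ‖-3 * ((x : ℂ)^4)⁻¹ * cubicW x‖ ≤ 2 * x⁻¹ := by
        rw [norm_mul, norm_mul, norm_inv, norm_pow, Complex.norm_real, Real.norm_eq_abs,
          abs_of_pos hx0, norm_neg]
        calc ‖(3 : ℂ)‖ * (x^4)⁻¹ * ‖cubicW x‖ ≤ 3 * (x^4)⁻¹ * (2/3 * x^3) := by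
              gcongr
              norm_num
          _ = 2 * x⁻¹ := by field_simp
      have n2 : ‖((x : ℂ)^3)⁻¹ * (-2 * Complex.I * x^2 *
          Complex.exp (-(2/3) * Complex.I * (x : ℂ)^3))‖ = 2 * x⁻¹ := by
        rw [norm_mul, norm_mul, norm_cubicExp, norm_mul, norm_mul, norm_inv, norm_pow, norm_pow,
          Complex.norm_real, Real.norm_eq_abs, abs_of_pos hx0, norm_neg, Complex.norm_I]
        norm_num
        field_simp
      rw [norm_div, norm_linExp, hnt]
      have n3 := (norm_add_le (-3 * ((x : ℂ)^4)⁻¹ * cubicW x) (((x : ℂ)^3)⁻¹ *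
        (-2 * Complex.I * x^2 * Complex.exp (-(2/3) * Complex.I * (x : ℂ)^3)))).trans
        (add_le_add n1 n2.le)
      calc _ ≤ (2 * x⁻¹ + 2 * x⁻¹) * (1 / (2 * a^2)) := by gcongr
        _ = 2 / a^2 * x⁻¹ := by field_simp; norm_num)
  rw [intervalIntegral.integral_const_mul, integral_inv_of_pos s3 ha0,
    show a / (1/a^2) = a^3 by field_simp, Real.log_pow] at k1
  simp only [norm_div, norm_linExp, hnt] at k1
  have hlog : Real.log a ≤ a := (Real.log_le_sub_one_of_pos ha0).trans (by linarith)
  have k1' : ‖∫ β in (1/a^2)..a, ((β : ℂ)^3)⁻¹ *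
      (Complex.exp (2 * Complex.I * (β : ℂ) * ((a^2 : ℝ) : ℂ)) * cubicW β)‖ ≤ 7 / a := by
    have e : (∫ β in (1/a^2)..a, ((β : ℂ)^3)⁻¹ *
      (Complex.exp (2 * Complex.I * (β : ℂ) * ((a^2 : ℝ) : ℂ)) * cubicW β)) =
      ∫ β in (1/a^2)..a, ((β : ℂ)^3)⁻¹ * cubicW β *
      Complex.exp (2 * Complex.I * (β : ℂ) * ((a^2 : ℝ) : ℂ)) := by
      congr 1; funext β; ring
    rw [e]
    refine k1.trans ?_
    have m1 := hm a ha0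
    have m2 := hm (1/a^2) s3
    calc _ ≤ 1 * (1 / (2 * a^2)) + 1 * (1 / (2 * a^2)) + 2 / a^2 * (((3:ℕ):ℝ) * a) := by
          gcongr
      _ = (1 / a) * (1 / a) + 6 / a := by push_cast; field_simp; ring
      _ ≤ (1 / a) * 1 + 6 / a := by
          gcongr
          rw [div_le_one ha0]; linarith
      _ = 7 / a := by ring
  have k2 : ‖∫ β in a..(a^4), ((β : ℂ)^3)⁻¹ *
      (Complex.exp (2 * Complex.I * (β : ℂ) * ((a^2 : ℝ) : ℂ)) * cubicW β)‖ ≤ 2 / a := by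
    have : ‖∫ β in a..(a^4), ((β : ℂ)^3)⁻¹ *
      (Complex.exp (2 * Complex.I * (β : ℂ) * ((a^2 : ℝ) : ℂ)) * cubicW β)‖ ≤
        ∫ β in a..(a^4), 2 * ((0 + β)^2)⁻¹ := by
      refine intervalIntegral.norm_integral_le_of_norm_le s2 ?_ ?_
      · refine Eventually.of_forall fun x hx => ?_
        have hx0 : 0 < x := ha0.trans hx.1
        have hx1 : 1 ≤ x := by linarith [hx.1]
        rw [norm_mul, norm_mul, norm_linExp, one_mul, norm_inv, norm_pow, Complex.norm_real,
          Real.norm_eq_abs, abs_of_pos hx0, zero_add, mul_comm]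
        gcongr
        · exact norm_cubicW_le_two x
        · norm_num
      · apply ContinuousOn.intervalIntegrable
        rw [Set.uIcc_of_le s2]
        refine ContinuousOn.mul (by fun_prop) (ContinuousOn.inv₀ (by fun_prop) fun x hx => ?_)
        have : 0 < 0 + x := by linarith [hx.1]
        positivity
    rw [intervalIntegral.integral_const_mul, integral_inv_sq_shift 0 s2 (by linarith)] at this
    refine this.trans ?_
    rw [zero_add, zero_add]
    have h4 : 0 < (a^4)⁻¹ := by positivity
    rw [div_eq_mul_inv]
    linarith
  rw [← intervalIntegral.integral_add_adjacent_intervals (hcont _ _ le_rfl s1) (hcont _ _ s1 s2)]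
  refine (norm_add_le _ _).trans ((add_le_add k1' k2).trans (le_of_eq (by ring)))

/-- The integrand of `Q₂` without the factor `sign β`; it vanishes at `β = 0` because `0⁻¹ = 0`. -/
noncomputable def halfKernel (t β : ℝ) : ℂ :=
  ((β : ℂ)^2)⁻¹ * (Complex.exp (2 * Complex.I * (β : ℂ) * (t : ℂ)) * cubicW β)

lemma norm_halfKernel (t β : ℝ) : ‖halfKernel t β‖ = ‖cubicW β‖ / β^2 := by
  unfold halfKernel
  rw [norm_mul, norm_mul, norm_linExp, one_mul, norm_inv, norm_pow, Complex.norm_real,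
    Real.norm_eq_abs, sq_abs, inv_mul_eq_div]

lemma integrable_halfKernel (t : ℝ) : Integrable (halfKernel t) := by
  refine Integrable.mono' (integrable_inv_one_add_sq.const_mul 4) ?_ ?_
  · have : Measurable (halfKernel t) := by
      unfold halfKernel cubicW
      fun_prop
    exact this.aestronglyMeasurable
  · refine Eventually.of_forall fun β => ?_
    rw [norm_halfKernel]
    exact norm_cubicW_div_sq β

/-! ### Asymptotics of the half-line integral -/

lemma halfKernel_middle : ∃ c : ℂ, ∀ a : ℝ, 2 ≤ a →
    ‖(∫ β in (1/a^2)..(a^4), halfKernel (a^2) β) -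
      ((a : ℂ)^2)⁻¹ * (Complex.exp (((4/3 * a^3 : ℝ) : ℂ) * Complex.I) * (c / (Real.sqrt a : ℝ)))‖
      ≤ 28 / a^3 := by
  obtain ⟨c, hc⟩ := airy_part
  refine ⟨c, fun a ha => ?_⟩
  have hE := hc a ha
  have hM := kernel_cube_bound ha
  have ha0 : 0 < a := by linarith
  have s3 : 0 < 1 / a^2 := by positivity
  have s2 : 1/a^2 ≤ a^4 := by
    rw [div_le_iff₀ (by positivity)]
    have : 1 ≤ a := by linarith
    calc (1:ℝ) = 1 * 1 := by norm_num
      _ ≤ a^4 * a^2 := by gcongr <;> exact one_le_pow₀ this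
  have hac : (a : ℂ) ≠ 0 := by exact_mod_cast ha0.ne'
  have hW : Continuous cubicW := by unfold cubicW; fun_prop
  have hne : ∀ x : ℝ, 1/a^2 ≤ x → (x : ℂ) ≠ 0 := fun x hx => by
    exact_mod_cast (s3.trans_le hx).ne'
  have hi2 : ContinuousOn (fun β : ℝ => ((β : ℂ)^2)⁻¹) (Set.uIcc (1/a^2) (a^4)) := by
    rw [Set.uIcc_of_le s2]
    exact ContinuousOn.inv₀ (by fun_prop) fun x hx => pow_ne_zero 2 (hne x hx.1)
  have hi3 : ContinuousOn (fun β : ℝ => ((β : ℂ)^3)⁻¹) (Set.uIcc (1/a^2) (a^4)) := by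
    rw [Set.uIcc_of_le s2]
    exact ContinuousOn.inv₀ (by fun_prop) fun x hx => pow_ne_zero 3 (hne x hx.1)
  set T : ℂ := ((a^2 : ℝ) : ℂ) with hT
  have hTa : T = (a : ℂ)^2 := by rw [hT]; push_cast; rfl
  have hT0 : T ≠ 0 := by rw [hTa]; exact pow_ne_zero 2 hac
  set L : ℝ → ℂ := fun β => Complex.exp (2 * Complex.I * (β : ℂ) * T) with hL
  set C : ℝ → ℂ := fun β => Complex.exp (-(2/3) * Complex.I * (β : ℂ)^3) with hC
  have hLn : ∀ β, ‖L β‖ = 1 := fun β => norm_linExp β (a^2)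
  have hLd : ∀ x, HasDerivAt L (2 * Complex.I * T * L x) x := hasDerivAt_linExp (a^2)
  have hLc : Continuous L := by rw [hL]; fun_prop
  have hCc : Continuous C := by rw [hC]; fun_prop
  set F' : ℝ → ℂ := fun x => 2 * Complex.I * T * L x * cubicW x +
    L x * (-2 * Complex.I * x^2 * C x) with hF'
  have hF'c : Continuous F' := by rw [hF']; fun_prop
  have ibp := intervalIntegral.integral_mul_deriv_eq_deriv_mul (a := 1/a^2) (b := a^4)
    (u := fun β : ℝ => ((β : ℂ)^2)⁻¹) (v := fun β => L β * cubicW β)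
    (u' := fun β : ℝ => -2 * ((β : ℂ)^3)⁻¹) (v' := F')
    (fun x hx => by
      rw [Set.uIcc_of_le s2] at hx
      have hx0 := hne x hx.1
      have h1 : HasDerivAt (fun x : ℝ => (x : ℂ)) 1 x := Complex.ofRealCLM.hasDerivAt
      refine ((h1.fun_pow 2).fun_inv (pow_ne_zero 2 hx0)).congr_deriv ?_
      field_simp
      norm_num
      ring)
    (fun x _ => (hLd x).mul (hasDerivAt_cubicW x))
    (ContinuousOn.intervalIntegrable (hi3.const_mul _)) (hF'c.intervalIntegrable _ _)
  have e1 : (∫ x in (1/a^2)..(a^4), -2 * ((x : ℂ)^3)⁻¹ * (L x * cubicW x)) =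
      -2 * ∫ x in (1/a^2)..(a^4), ((x : ℂ)^3)⁻¹ * (L x * cubicW x) := by
    rw [← intervalIntegral.integral_const_mul]
    congr 1; funext x; ring
  rw [e1] at ibp
  -- `β⁻² = φ'(β) / (2tβ²) + 1/t` for the phase `φ(β) = 2βt - (2/3)β³`, with `t = T = a²`.
  have e2 : (∫ β in (1/a^2)..(a^4), halfKernel (a^2) β) =
      (2 * Complex.I * T)⁻¹ * (∫ x in (1/a^2)..(a^4), ((x : ℂ)^2)⁻¹ * F' x) +
      T⁻¹ * ∫ x in (1/a^2)..(a^4), L x * C x := by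
    rw [← intervalIntegral.integral_const_mul, ← intervalIntegral.integral_const_mul,
      ← intervalIntegral.integral_add]
    · apply intervalIntegral.integral_congr
      intro x hx
      rw [Set.uIcc_of_le s2] at hx
      have hx0 := hne x hx.1
      have hk : halfKernel (a^2) x = ((x : ℂ)^2)⁻¹ * (L x * cubicW x) := rfl
      simp only [hk, hF']
      field_simp
      ring
    · exact (ContinuousOn.intervalIntegrable (hi2.mul hF'c.continuousOn)).const_mul _
    · exact (Continuous.intervalIntegrable (by fun_prop) _ _).const_mul _
  have hb1 : ‖(((a^4 : ℝ) : ℂ)^2)⁻¹ * (L (a^4) * cubicW (a^4))‖ ≤ 1 / a := by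
    rw [norm_mul, norm_mul, hLn, one_mul, norm_inv, norm_pow, Complex.norm_real,
      Real.norm_eq_abs, abs_of_pos (by positivity), inv_mul_eq_div,
      div_le_div_iff₀ (by positivity) ha0, one_mul]
    have h1 : (1:ℝ) ≤ a^6 := one_le_pow₀ (by linarith)
    calc ‖cubicW (a^4)‖ * a ≤ 2 * a := by gcongr; exact norm_cubicW_le_two _
      _ ≤ a * a := by gcongr
      _ = 1 * a^2 := by ring
      _ ≤ a^6 * a^2 := by gcongr
      _ = (a^4)^2 := by ring
  have hb2 : ‖(((1/a^2 : ℝ) : ℂ)^2)⁻¹ * (L (1/a^2) * cubicW (1/a^2))‖ ≤ 1 / a := by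
    have hw := norm_cubicW_le_cube (1/a^2)
    rw [abs_of_pos s3] at hw
    rw [norm_mul, norm_mul, hLn, one_mul, norm_inv, norm_pow, Complex.norm_real,
      Real.norm_eq_abs, abs_of_pos s3]
    calc ((1/a^2)^2)⁻¹ * ‖cubicW (1/a^2)‖ ≤ ((1/a^2)^2)⁻¹ * (2/3 * (1/a^2)^3) := by gcongr
      _ = 2/3 * (1/a) * (1/a) := by field_simp
      _ ≤ 1 * (1/a) * 1 := by
        gcongr
        · norm_num
        · rw [div_le_one ha0]; linarith
      _ = 1/a := by ring
  set M := ∫ x in (1/a^2)..(a^4), ((x : ℂ)^3)⁻¹ * (L x * cubicW x) with hMdef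
  set E := ∫ x in (1/a^2)..(a^4), L x * C x with hEdef
  have e3 : (∫ β in (1/a^2)..(a^4), halfKernel (a^2) β) -
      ((a : ℂ)^2)⁻¹ * (Complex.exp (((4/3 * a^3 : ℝ) : ℂ) * Complex.I) * (c / (Real.sqrt a : ℝ))) =
      (2 * Complex.I * T)⁻¹ * ((((a^4 : ℝ) : ℂ)^2)⁻¹ * (L (a^4) * cubicW (a^4)) -
        (((1/a^2 : ℝ) : ℂ)^2)⁻¹ * (L (1/a^2) * cubicW (1/a^2)) - -2 * M) +
      T⁻¹ * (E - Complex.exp (((4/3 * a^3 : ℝ) : ℂ) * Complex.I) * (c / (Real.sqrt a : ℝ))) := by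
    rw [e2, ibp, hTa]
    ring
  have hTn : ‖T‖ = a^2 := by
    rw [hT, Complex.norm_real, Real.norm_eq_abs, abs_of_pos (by positivity)]
  rw [e3]
  refine (norm_add_le _ _).trans ?_
  rw [norm_mul, norm_mul, norm_inv, norm_inv, norm_mul, norm_mul, Complex.norm_I, hTn]
  have hbr : ‖(((a^4 : ℝ) : ℂ)^2)⁻¹ * (L (a^4) * cubicW (a^4)) -
        (((1/a^2 : ℝ) : ℂ)^2)⁻¹ * (L (1/a^2) * cubicW (1/a^2)) - -2 * M‖ ≤
        1/a + 1/a + 2 * (9/a) := by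
    refine (norm_sub_le _ _).trans (add_le_add ((norm_sub_le _ _).trans (add_le_add hb1 hb2)) ?_)
    rw [norm_mul, norm_neg]
    gcongr
    norm_num
  calc _ ≤ (‖(2:ℂ)‖ * 1 * a^2)⁻¹ * (1/a + 1/a + 2 * (9/a)) + (a^2)⁻¹ * (18 / a) := by gcongr
    _ = 28 / a^3 := by
      norm_num
      field_simp
      norm_num

lemma halfKernel_asymp : ∃ c : ℂ, ∀ a : ℝ, 2 ≤ a →
    ‖(∫ β in Set.Ioi (0:ℝ), halfKernel (a^2) β) -
      ((a : ℂ)^2)⁻¹ * (Complex.exp (((4/3 * a^3 : ℝ) : ℂ) * Complex.I) * (c / (Real.sqrt a : ℝ)))‖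
      ≤ 31 / a^3 := by
  obtain ⟨c, hc⟩ := halfKernel_middle
  refine ⟨c, fun a ha => ?_⟩
  have hm := hc a ha
  have ha0 : 0 < a := by linarith
  have s3 : 0 < 1 / a^2 := by positivity
  have hint := integrable_halfKernel (a^2)
  have split : (∫ β in Set.Ioi (0:ℝ), halfKernel (a^2) β) =
      (∫ β in (0:ℝ)..(1/a^2), halfKernel (a^2) β) + (∫ β in (1/a^2)..(a^4), halfKernel (a^2) β) +
      ∫ β in Set.Ioi (a^4), halfKernel (a^2) β := by
    rw [intervalIntegral.integral_add_adjacent_intervals hint.intervalIntegrable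
      hint.intervalIntegrable]
    exact (intervalIntegral.integral_interval_add_Ioi hint.integrableOn hint.integrableOn).symm
  have b1 : ‖∫ β in (0:ℝ)..(1/a^2), halfKernel (a^2) β‖ ≤ 1 / a^3 := by
    have : ‖∫ β in (0:ℝ)..(1/a^2), halfKernel (a^2) β‖ ≤ (1/a^2) * |1/a^2 - 0| := by
      apply intervalIntegral.norm_integral_le_of_norm_le_const
      intro x hx
      rw [Set.uIoc_of_le s3.le] at hx
      have hw := norm_cubicW_le_cube x
      rw [abs_of_pos hx.1] at hw
      have hx2 : 0 < x^2 := pow_pos hx.1 2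
      rw [norm_halfKernel, div_le_iff₀ hx2]
      nlinarith [hx.1, hx.2]
    refine this.trans ?_
    rw [sub_zero, abs_of_pos s3]
    calc 1/a^2 * (1/a^2) = 1/a^3 * (1/a) := by field_simp
      _ ≤ 1/a^3 * 1 := by gcongr; rw [div_le_one ha0]; linarith
      _ = 1/a^3 := mul_one _
  have b2 : ‖∫ β in Set.Ioi (a^4), halfKernel (a^2) β‖ ≤ 2 / a^3 := by
    have h4 : 0 < a^4 := by positivity
    have hi : IntegrableOn (fun x : ℝ => 2 * x ^ (-2:ℝ)) (Set.Ioi (a^4)) :=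
      (integrableOn_Ioi_rpow_of_lt (by norm_num) h4).const_mul 2
    have : ‖∫ β in Set.Ioi (a^4), halfKernel (a^2) β‖ ≤ ∫ x in Set.Ioi (a^4), 2 * x ^ (-2:ℝ) := by
      refine norm_integral_le_of_norm_le hi ?_
      refine (ae_restrict_iff' measurableSet_Ioi).mpr (Eventually.of_forall fun x hx => ?_)
      have hx0 : 0 < x := h4.trans hx
      rw [norm_halfKernel, Real.rpow_neg hx0.le, div_eq_mul_inv]
      have : x ^ (2:ℝ) = x^2 := by norm_cast
      rw [this]
      gcongr
      exact norm_cubicW_le_two x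
    rw [integral_const_mul, integral_Ioi_rpow_of_lt (by norm_num) h4] at this
    refine this.trans ?_
    have : (a^4) ^ ((-2:ℝ) + 1) = (a^4)⁻¹ := by
      rw [show (-2:ℝ) + 1 = -1 by norm_num, Real.rpow_neg_one]
    rw [this]
    calc 2 * (-(a^4)⁻¹ / (-2 + 1)) = 2 / a^3 * (1/a) := by norm_num; field_simp
      _ ≤ 2/a^3 * 1 := by gcongr; rw [div_le_one ha0]; linarith
      _ = 2/a^3 := mul_one _
  rw [split]
  set P := ∫ β in (0:ℝ)..(1/a^2), halfKernel (a^2) β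
  set S := ∫ β in (1/a^2)..(a^4), halfKernel (a^2) β
  set U := ∫ β in Set.Ioi (a^4), halfKernel (a^2) β
  rw [show ∀ N : ℂ, P + S + U - N = P + (S - N) + U from fun N => by ring]
  refine (norm_add_le _ _).trans ((add_le_add ((norm_add_le _ _).trans
    (add_le_add b1 hm)) b2).trans (le_of_eq (by ring)))

lemma halfKernel_neg (t β : ℝ) : halfKernel t (-β) = (starRingEnd ℂ) (halfKernel t β) := by
  unfold halfKernel cubicW
  simp only [map_mul, map_inv₀, map_pow, map_sub, ← Complex.exp_conj, Complex.conj_ofReal,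
    Complex.conj_I, map_neg, map_div₀, map_ofNat, map_one, Complex.ofReal_neg]
  ring_nf

/-- The contributions of `β` and `-β` combine to an imaginary part; in particular `Q₂` is real. -/
lemma shortLoopQ₂_eq (t : ℝ) : shortLoopQ₂ t =
    (((((2*Real.pi) ^ 2)⁻¹ / 2) * (∫ β in Set.Ioi (0:ℝ), halfKernel t β).im : ℝ) : ℂ) := by
  unfold shortLoopQ₂
  set g : ℝ → ℂ := fun β : ℝ => (Real.sign β : ℂ) * (((|β| ^ 2)⁻¹ : ℝ) : ℂ) *
      Complex.exp (2 * Complex.I * (β : ℂ) * (t : ℂ)) *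
      (Complex.exp (-(2/3) * Complex.I * (β : ℂ)^3) - 1) with hg
  have hgp : ∀ β ∈ Set.Ioi (0:ℝ), g β = halfKernel t β := by
    intro β hβ
    simp only [hg, halfKernel, cubicW, Real.sign_of_pos hβ, sq_abs]
    push_cast; ring
  have hgn : ∀ β ∈ Set.Iic (0:ℝ), g β = -halfKernel t β := by
    intro β hβ
    rcases eq_or_lt_of_le (show β ≤ 0 from hβ) with rfl | hβ
    · simp [hg, halfKernel]
    simp only [hg, halfKernel, cubicW, Real.sign_of_neg hβ, sq_abs]
    push_cast; ring
  have hint := integrable_halfKernel t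
  have hsplit : ∫ β, g β = (∫ β in Set.Iic (0:ℝ), g β) + ∫ β in Set.Ioi (0:ℝ), g β := by
    refine (intervalIntegral.integral_Iic_add_Ioi ?_ ?_).symm
    · exact (hint.neg.integrableOn (s := Set.Iic 0)).congr_fun (fun x hx => (hgn x hx).symm)
        measurableSet_Iic
    · exact (hint.integrableOn (s := Set.Ioi 0)).congr_fun (fun x hx => (hgp x hx).symm)
        measurableSet_Ioi
  have h1 := setIntegral_congr_fun (μ := volume) measurableSet_Iic hgn
  have h2 := setIntegral_congr_fun (μ := volume) measurableSet_Ioi hgp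
  have h3 : ∫ β in Set.Iic (0:ℝ), halfKernel t β =
      (starRingEnd ℂ) (∫ β in Set.Ioi (0:ℝ), halfKernel t β) := by
    have := integral_comp_neg_Ioi (0:ℝ) (halfKernel t)
    rw [neg_zero] at this
    rw [← this, ← integral_conj]
    simp only [halfKernel_neg]
  rw [hsplit, h1, h2, integral_neg, h3, neg_add_eq_sub, Complex.sub_conj]
  push_cast
  field_simp
  ring

/-- There exist real constants `A`, `B` such that
`Q₂(t) − t^{−5/4}(A cos((4/3)t^{3/2}) + B sin((4/3)t^{3/2})) = O(t^{−3/2})` as `t → +∞`. -/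
theorem shortLoopQ₂_asymptotics :
    ∃ A B : ℝ,
      (fun t : ℝ => shortLoopQ₂ t - ((t ^ (-(5:ℝ)/4) : ℝ) : ℂ) *
          ((A * Real.cos ((4/3) * t ^ ((3:ℝ)/2)) + B * Real.sin ((4/3) * t ^ ((3:ℝ)/2)) : ℝ) : ℂ))
        =O[atTop] fun t : ℝ => t ^ (-(3:ℝ)/2) := by
  obtain ⟨c, hc⟩ := halfKernel_asymp
  set k : ℝ := ((2*Real.pi) ^ 2)⁻¹ / 2 with hk
  have hk0 : 0 ≤ k := by rw [hk]; positivity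
  refine ⟨k * c.im, k * c.re, IsBigO.of_bound (k * 31) ?_⟩
  filter_upwards [eventually_ge_atTop (4:ℝ)] with t ht
  have ht0 : 0 < t := by linarith
  set a := Real.sqrt t with hadef
  have ha2 : a^2 = t := Real.sq_sqrt ht0.le
  have ha : 2 ≤ a := Real.le_sqrt_of_sq_le (by linarith)
  have ha0 : 0 < a := by linarith
  have hpow : ∀ r : ℝ, t ^ r = a ^ (2 * r) := fun r => by
    rw [Real.rpow_mul ha0.le, ← ha2]; norm_cast
  have p1 : t ^ ((3:ℝ)/2) = a^3 := by
    rw [hpow, show 2 * ((3:ℝ)/2) = ((3:ℕ):ℝ) by norm_num, Real.rpow_natCast]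
  have p2 : t ^ (-(3:ℝ)/2) = 1 / a^3 := by
    rw [neg_div, Real.rpow_neg ht0.le, p1, one_div]
  have p3 : t ^ (-(5:ℝ)/4) = (a^2)⁻¹ * (Real.sqrt a)⁻¹ := by
    rw [hpow, show 2 * (-(5:ℝ)/4) = -(((2:ℕ):ℝ) + 1/2) by norm_num, Real.rpow_neg ha0.le,
      Real.rpow_add ha0, Real.rpow_natCast, Real.sqrt_eq_rpow, mul_inv]
  have h := hc a ha
  have him := (Complex.abs_im_le_norm _).trans h
  rw [ha2] at him
  have hs : 0 < Real.sqrt a := Real.sqrt_pos.mpr ha0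
  have hmain : (((a : ℂ)^2)⁻¹ * (Complex.exp (((4/3 * a^3 : ℝ) : ℂ) * Complex.I) *
      (c / (Real.sqrt a : ℝ)))).im =
      (a^2)⁻¹ * (Real.sqrt a)⁻¹ * (c.im * Real.cos (4/3 * a^3) + c.re * Real.sin (4/3 * a^3)) := by
    have : ((a : ℂ)^2)⁻¹ * (Complex.exp (((4/3 * a^3 : ℝ) : ℂ) * Complex.I) *
      (c / (Real.sqrt a : ℝ))) = (((a^2)⁻¹ * (Real.sqrt a)⁻¹ : ℝ) : ℂ) *
        (Complex.exp (((4/3 * a^3 : ℝ) : ℂ) * Complex.I) * c) := by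
      push_cast; ring
    rw [this, Complex.im_ofReal_mul, Complex.mul_im, Complex.exp_ofReal_mul_I_re,
      Complex.exp_ofReal_mul_I_im]
    ring
  rw [Complex.sub_im, hmain] at him
  rw [shortLoopQ₂_eq, p1, p2, p3, ← Complex.ofReal_mul, ← Complex.ofReal_sub, Complex.norm_real,
    Real.norm_eq_abs, Real.norm_eq_abs, abs_of_pos (by positivity : 0 < 1/a^3)]
  have e : ((2*Real.pi) ^ 2)⁻¹ / 2 * (∫ β in Set.Ioi (0:ℝ), halfKernel t β).im -
      (a^2)⁻¹ * (Real.sqrt a)⁻¹ * (k * c.im * Real.cos (4/3 * a^3) + k * c.re * Real.sin (4/3 * a^3))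
      = k * ((∫ β in Set.Ioi (0:ℝ), halfKernel t β).im - (a^2)⁻¹ * (Real.sqrt a)⁻¹ *
        (c.im * Real.cos (4/3 * a^3) + c.re * Real.sin (4/3 * a^3))) := by
    rw [← hk]; ring
  rw [e, abs_mul, abs_of_nonneg hk0]
  calc _ ≤ k * (31 / a^3) := by gcongr
    _ = _ := by ring
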